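/- arXiv:2008.08830 — 5 statements merged into one kernel-verified Lean document; each statement's English description precedes it below -/
import Mathlib

section
/- Let S be a finite state space with transition rates r(s,s') ≥ 0 for s ≠ s' (and r(s,s) = 0), let π be a stationary distribution, and let V : S → [0,∞). Define ν_max = max over pairs s,s' with r(s,s') > 0 of |V(s) − V(s')|, and f_max = max(0, max_{s∈S} ∑_{s' : V(s') > V(s)} r(s,s')·(V(s') − V(s))). Let E ⊆ S, and suppose there exist B > 0, γ > 0 and ξ ≥ 0 such that: (1) GV(s) ≤ −γ whenever V(s) ≥ B and s ∈ E; (2) GV(s) ≤ ξ whenever V(s) ≥ B and s ∉ E. Then for every positive integer j, the stationary probability satisfies π({s : V(s) ≥ B + 2 ν_max j}) ≤ (f_max/(f_max + γ))^j + (ξ/γ + 1)·π({s : s ∉ E}). -/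
open scoped Classical

lemma stationary_gen {S : Type*} [Fintype S] (r : S → S → ℝ) (pr : S → ℝ)
    (hbal : ∀ s, pr s * ∑ s', r s s' = ∑ s', pr s' * r s' s) (W : S → ℝ) :
    ∑ s, pr s * ∑ s', r s s' * (W s' - W s) = 0 := by
  have h1 : ∑ s, pr s * ∑ s', r s s' * (W s' - W s)
      = ∑ s, ∑ s', pr s * r s s' * W s' - ∑ s, (pr s * ∑ s', r s s') * W s := by
    rw [← Finset.sum_sub_distrib]
    refine Finset.sum_congr rfl fun s _ => ?_
    rw [Finset.mul_sum, Finset.mul_sum, Finset.sum_mul, ← Finset.sum_sub_distrib]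
    refine Finset.sum_congr rfl fun s' _ => ?_
    ring
  rw [h1, Finset.sum_comm, sub_eq_zero]
  refine Finset.sum_congr rfl fun s _ => ?_
  rw [hbal, Finset.sum_mul]

/-- The geometric tail bound with an exceptional set (Lemma 5.7): if the Lyapunov
function `V` has drift at most `-γ` on the exceptional-set complement whenever
`V ≥ B`, and drift at most `ξ` otherwise, then the stationary probability that
`V ≥ B + 2 νmax j` decays geometrically in `j` up to the probability of the
exceptional set. -/
theorem stmt_3 {S : Type*} [Fintype S] (r : S → S → ℝ)
    (hr : ∀ s s', s ≠ s' → 0 ≤ r s s') (hdiag : ∀ s, r s s = 0)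
    (pr : S → ℝ) (hpr0 : ∀ s, 0 ≤ pr s) (hpr1 : ∑ s, pr s = 1)
    (hbal : ∀ s, pr s * ∑ s', r s s' = ∑ s', pr s' * r s' s)
    (V : S → ℝ) (hV : ∀ s, 0 ≤ V s)
    (νmax fmax : ℝ)
    (hν : νmax = sSup ((fun p : S × S => |V p.1 - V p.2|) '' {p | 0 < r p.1 p.2}))
    (hf : fmax = max 0 (⨆ s : S, ∑ s' ∈ Finset.univ.filter (fun s' => V s < V s'),
        r s s' * (V s' - V s)))
    (E : Set S) (B γ ξ : ℝ) (hB : 0 < B) (hγ : 0 < γ) (hξ : 0 ≤ ξ)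
    (hdrift1 : ∀ s, B ≤ V s → s ∈ E → ∑ s', r s s' * (V s' - V s) ≤ -γ)
    (hdrift2 : ∀ s, B ≤ V s → s ∉ E → ∑ s', r s s' * (V s' - V s) ≤ ξ)
    (j : ℕ) (hj : 1 ≤ j) :
    ∑ s ∈ Finset.univ.filter (fun s => B + 2 * νmax * j ≤ V s), pr s
      ≤ (fmax / (fmax + γ)) ^ j
        + (ξ / γ + 1) * ∑ s ∈ Finset.univ.filter (fun s => s ∉ E), pr s := by
  have hr' : ∀ s s', 0 ≤ r s s' := fun s s' => by
    by_cases h : s = s'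
    · subst h; rw [hdiag]
    · exact hr s s' h
  have hjump : ∀ s s', 0 < r s s' → |V s - V s'| ≤ νmax := fun s s' h => by
    rw [hν]
    exact le_csSup (Set.toFinite _).bddAbove ⟨(s, s'), h, rfl⟩
  have hf0 : 0 ≤ fmax := hf ▸ le_max_left _ _
  have hfs : ∀ s, ∑ s' ∈ Finset.univ.filter (fun s' => V s < V s'),
      r s s' * (V s' - V s) ≤ fmax := fun s => by
    rw [hf]
    refine le_trans ?_ (le_max_right _ _)
    exact le_ciSup (f := fun s => ∑ s' ∈ Finset.univ.filter (fun s' => V s < V s'),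
      r s s' * (V s' - V s)) (Set.toFinite _).bddAbove s
  have hν0 : 0 ≤ νmax := by
    rw [hν]
    refine Real.sSup_nonneg ?_
    rintro x ⟨p, _, rfl⟩
    exact abs_nonneg _
  clear hν hf
  set q := ∑ s ∈ Finset.univ.filter (fun s => s ∉ E), pr s with hq
  have step : ∀ c, B ≤ c + νmax →
      (fmax + γ) * ∑ s ∈ Finset.univ.filter (fun s => c + νmax ≤ V s), pr s
        ≤ fmax * ∑ s ∈ Finset.univ.filter (fun s => c - νmax ≤ V s), pr s + (γ + ξ) * q := by
    intro c hc
    have h0 := stationary_gen r pr hbal (fun s => max c (V s))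
    have key : ∀ s, pr s * ∑ s', r s s' * (max c (V s') - max c (V s)) ≤
        fmax * (if c - νmax ≤ V s then pr s else 0)
        - (fmax + γ) * (if c + νmax ≤ V s then pr s else 0)
        + (γ + ξ) * (if s ∉ E then pr s else 0) := by
      intro s
      have hp := hpr0 s
      by_cases h1 : c + νmax ≤ V s
      · have e : ∑ s', r s s' * (max c (V s') - max c (V s)) = ∑ s', r s s' * (V s' - V s) := by
          refine Finset.sum_congr rfl fun s' _ => ?_
          rcases (hr' s s').eq_or_lt with h | h
          · rw [← h]; simp
          · have := abs_le.1 (hjump s s' h)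
            rw [max_eq_right (by linarith), max_eq_right (by linarith)]
        rw [e, if_pos h1, if_pos (by linarith)]
        by_cases hE : s ∈ E
        · have := mul_le_mul_of_nonneg_left (hdrift1 s (by linarith) hE) hp
          rw [if_neg (not_not.2 hE)]
          linarith
        · have := mul_le_mul_of_nonneg_left (hdrift2 s (by linarith) hE) hp
          rw [if_pos hE]
          linarith
      · rw [if_neg h1]
        have hlast : 0 ≤ (γ + ξ) * (if s ∉ E then pr s else 0) := by
          refine mul_nonneg (by linarith) ?_
          split_ifs <;> linarith
        by_cases h2 : c - νmax ≤ V s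
        · rw [if_pos h2]
          have e : ∑ s', r s s' * (max c (V s') - max c (V s)) ≤ fmax := by
            refine le_trans ?_ (hfs s)
            rw [Finset.sum_filter]
            refine Finset.sum_le_sum fun s' _ => ?_
            split_ifs with h
            · refine mul_le_mul_of_nonneg_left ?_ (hr' s s')
              rcases max_cases c (V s') with h | h <;> rcases max_cases c (V s) with h' | h' <;>
                linarith
            · refine mul_nonpos_of_nonneg_of_nonpos (hr' s s') ?_
              have := max_le_max_left c (not_lt.1 h)
              linarith
          have := mul_le_mul_of_nonneg_left e hp
          linarith
        · rw [if_neg h2]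
          have e : ∑ s', r s s' * (max c (V s') - max c (V s)) = 0 := by
            refine Finset.sum_eq_zero fun s' _ => ?_
            rcases (hr' s s').eq_or_lt with h | h
            · rw [← h]; simp
            · have := abs_le.1 (hjump s s' h)
              rw [max_eq_left (by linarith), max_eq_left (by linarith)]
              simp
          rw [e]
          linarith
    have h1 := Finset.sum_le_sum fun s (_ : s ∈ Finset.univ) => key s
    rw [h0, Finset.sum_add_distrib, Finset.sum_sub_distrib, ← Finset.mul_sum, ← Finset.mul_sum,
      ← Finset.mul_sum, ← Finset.sum_filter, ← Finset.sum_filter, ← Finset.sum_filter] at h1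
    linarith
  have hq0 : 0 ≤ q := Finset.sum_nonneg fun s _ => hpr0 s
  have hfg : 0 < fmax + γ := by linarith
  clear hj
  induction j with
  | zero =>
    have h1 : ∑ s ∈ Finset.univ.filter (fun s => B + 2 * νmax * (0 : ℕ) ≤ V s), pr s ≤ 1 := by
      rw [← hpr1]
      exact Finset.sum_le_sum_of_subset_of_nonneg (Finset.filter_subset _ _)
        fun s _ _ => hpr0 s
    have h2 : 0 ≤ (ξ / γ + 1) * q := by positivity
    rw [pow_zero]
    exact le_add_of_le_of_nonneg h1 h2
  | succ n ih =>
    have hn : 0 ≤ νmax * n := by positivity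
    have h := step (B + 2 * νmax * n + νmax) (by linarith)
    have e1 : B + 2 * νmax * n + νmax + νmax = B + 2 * νmax * ((n + 1 : ℕ) : ℝ) := by
      push_cast; ring
    have e2 : B + 2 * νmax * n + νmax - νmax = B + 2 * νmax * n := by ring
    rw [e1, e2] at h
    refine le_of_mul_le_mul_left ?_ hfg
    refine h.trans ?_
    have h3 := mul_le_mul_of_nonneg_left ih hf0
    refine (add_le_add_left h3 _).trans (le_of_eq ?_)
    rw [pow_succ]
    field_simp
    ring
end

section
/- Let K and I be finite sets, let N > 0, H > 0, d̃ > 0, p > 0 be real numbers, let λ : K → [0,∞), and let z : K × I → [0,1]. Suppose that z(ℓ,r) ≥ min(1, λ(ℓ)·H/(N·d̃)) for every ℓ ∈ K and r ∈ I, that ∑_{ℓ∈K} λ(ℓ) ≥ N·d̃, and that |I| ≥ N·p. Then ∏_{ℓ∈K} ∏_{r∈I} (1 − z(ℓ,r)) ≤ exp(−H·N·p). -/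
/-- The disconnection estimate at the core of Theorems 3.5 and 3.6: if each edge
probability `z ℓ r` is at least `min(1, λ(ℓ)·H/(N·d̃))`, the total arrival rate of the
port set `K` is at least `N·d̃`, and the server set `I` has size at least `N·p`, then
the probability `∏∏(1 − z)` that `K` and `I` are disconnected is at most
`exp(−H·N·p)`. -/
theorem stmt_7 {A B : Type*} (K : Finset A) (I : Finset B)
    (N H d p : ℝ) (hN : 0 < N) (hH : 0 < H) (hd : 0 < d) (hp : 0 < p)
    (lam : A → ℝ) (hlam : ∀ ℓ ∈ K, 0 ≤ lam ℓ)
    (z : A → B → ℝ)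
    (hz01 : ∀ ℓ ∈ K, ∀ r ∈ I, z ℓ r ∈ Set.Icc (0 : ℝ) 1)
    (hzlow : ∀ ℓ ∈ K, ∀ r ∈ I, min 1 (lam ℓ * H / (N * d)) ≤ z ℓ r)
    (hKsum : N * d ≤ ∑ ℓ ∈ K, lam ℓ)
    (hI : N * p ≤ (I.card : ℝ)) :
    ∏ ℓ ∈ K, ∏ r ∈ I, (1 - z ℓ r) ≤ Real.exp (-(H * N * p)) := by
  have key : ∀ ℓ ∈ K, ∀ r ∈ I, 1 - z ℓ r ≤ Real.exp (-(lam ℓ * H / (N * d))) := by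
    intro ℓ hl r hr
    have h := hzlow ℓ hl r hr
    rcases min_le_iff.mp h with h1 | h1
    · exact le_trans (by linarith) (Real.exp_pos _).le
    · have := Real.add_one_le_exp (-(lam ℓ * H / (N * d)))
      linarith
  have hnn : ∀ ℓ ∈ K, ∀ r ∈ I, 0 ≤ 1 - z ℓ r := fun ℓ hl r hr => by
    have := (hz01 ℓ hl r hr).2
    linarith
  calc ∏ ℓ ∈ K, ∏ r ∈ I, (1 - z ℓ r)
      ≤ ∏ ℓ ∈ K, ∏ r ∈ I, Real.exp (-(lam ℓ * H / (N * d))) :=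
        Finset.prod_le_prod (fun ℓ hl => Finset.prod_nonneg (hnn ℓ hl))
          (fun ℓ hl => Finset.prod_le_prod (hnn ℓ hl) (key ℓ hl))
    _ = Real.exp (∑ ℓ ∈ K, ∑ r ∈ I, (-(lam ℓ * H / (N * d)))) := by
        simp only [Real.exp_sum]
    _ ≤ Real.exp (-(H * N * p)) := by
        apply Real.exp_le_exp.mpr
        have e : ∑ ℓ ∈ K, ∑ r ∈ I, (-(lam ℓ * H / (N * d)))
            = -((I.card : ℝ) * (H * ((∑ ℓ ∈ K, lam ℓ) / (N * d)))) := by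
          simp only [Finset.sum_const, nsmul_eq_mul, Finset.sum_div, Finset.mul_sum,
            ← Finset.sum_neg_distrib]
          exact Finset.sum_congr rfl (fun _ _ => by ring)
        rw [e]
        have h1 : 1 ≤ (∑ ℓ ∈ K, lam ℓ) / (N * d) := by
          rw [le_div_iff₀ (by positivity)]
          linarith
        have h2 : H ≤ H * ((∑ ℓ ∈ K, lam ℓ) / (N * d)) := le_mul_of_one_le_right hH.le h1
        have h3 := mul_le_mul hI h2 hH.le (Nat.cast_nonneg _)
        linarith
end

section
/- Let 𝓛 be a finite set of ports with |𝓛| = L and 𝓡 a finite set of servers with |𝓡| = N, with nested subsets 𝓡¹ ⊆ 𝓡² ⊆ 𝓡. Let λ : 𝓛 → [0,∞), let 0 < p₁ ≤ p₂ < 1 and 0 < d̃₁ ≤ d̃₂, and set H_j = 2·ln(2)·(N+L)/(N·p_j) for j ∈ {1,2}. Form a random bipartite graph G between 𝓛 and 𝓡 in which, independently over all pairs, port ℓ is joined to server r ∈ 𝓡¹ with probability min(1, λ(ℓ)·H₁/(N·d̃₁)), and to server r ∈ 𝓡² ∖ 𝓡¹ with probability min(1, λ(ℓ)·H₂/(N·d̃₂)).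 For a subset 𝓘 ⊆ 𝓡, let D_𝓘 = ∑ of λ(ℓ) over all ports ℓ that have no edge to any server in 𝓘. Then with probability at least 1 − 2^{−(N+L−1)}, the graph G satisfies simultaneously: D_𝓘 ≤ N·d̃₁ for every 𝓘 ⊆ 𝓡¹ with |𝓘| ≥ N·p₁, and D_𝓘 ≤ N·d̃₂ for every 𝓘 ⊆ 𝓡² with |𝓘| ≥ N·p₂. -/
open scoped Classical

lemma aux_sum_avoid {E : Type*} [Fintype E] (z : E → ℝ) (T : Finset E) :
    ∑ G : Finset E, (if ∀ e ∈ T, e ∉ G then ∏ e, (if e ∈ G then z e else 1 - z e) else 0)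
      = ∏ e ∈ T, (1 - z e) := by
  have h1 : ∀ G : Finset E,
      (if ∀ e ∈ T, e ∉ G then ∏ e, (if e ∈ G then z e else 1 - z e) else 0)
      = (∏ e ∈ G, (if e ∈ T then 0 else z e)) * ∏ e ∈ Finset.univ \ G, (1 - z e) := by
    intro G
    split_ifs with h
    · rw [Finset.prod_ite]
      congr 1
      · rw [Finset.filter_mem_eq_inter, Finset.univ_inter]
        refine Finset.prod_congr rfl fun e he => ?_
        rw [if_neg (fun hT => h e hT he)]
      · refine Finset.prod_congr ?_ fun e he => rfl
        ext e
        simp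
    · push Not at h
      obtain ⟨e, heT, heG⟩ := h
      rw [Finset.prod_eq_zero heG (by simp [heT]), zero_mul]
  rw [Finset.sum_congr rfl fun G _ => h1 G, ← Finset.powerset_univ, ← Finset.prod_add]
  rw [← Finset.prod_subset (Finset.subset_univ T)]
  · refine Finset.prod_congr rfl fun e he => ?_
    simp [he]
  · intro e _ he
    simp [he]

lemma aux_one_sub (z x : ℝ) (h : min 1 x ≤ z) : 1 - z ≤ Real.exp (-x) := by
  rcases min_le_iff.1 h with h | h
  · linarith [Real.exp_pos (-x)]
  · linarith [Real.add_one_le_exp (-x)]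

lemma aux_cond {PortT ServT : Type*} [Fintype PortT] [Fintype ServT]
    (L N : ℕ) (hL : Fintype.card PortT = L) (hN : Fintype.card ServT = N)
    (hNpos : 0 < N) (R : Finset ServT)
    (lam : PortT → ℝ) (hlam : ∀ ℓ, 0 ≤ lam ℓ)
    (p d H : ℝ) (hp : 0 < p) (hd : 0 < d)
    (hH : H = 2 * Real.log 2 * ((N : ℝ) + L) / ((N : ℝ) * p))
    (z : PortT → ServT → ℝ) (hz0 : ∀ ℓ r, 0 ≤ z ℓ r) (hz1 : ∀ ℓ r, z ℓ r ≤ 1)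
    (hz : ∀ ℓ, ∀ r ∈ R, min 1 (lam ℓ * H / ((N : ℝ) * d)) ≤ z ℓ r)
    (weight : Finset (PortT × ServT) → ℝ)
    (hweight : ∀ G, weight G = ∏ e : PortT × ServT,
      (if e ∈ G then z e.1 e.2 else 1 - z e.1 e.2))
    (D : Finset (PortT × ServT) → Finset ServT → ℝ)
    (hD : ∀ G I, D G I =
      ∑ ℓ ∈ Finset.univ.filter (fun ℓ : PortT => ∀ r ∈ I, (ℓ, r) ∉ G), lam ℓ) :
    ∑ G : Finset (PortT × ServT), (if ∀ I ⊆ R, (N : ℝ) * p ≤ (I.card : ℝ) → D G I ≤ (N : ℝ) * d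
      then 0 else weight G) ≤ ((2 : ℝ) ^ (N + L))⁻¹ := by
  have hw0 : ∀ G, 0 ≤ weight G := by
    intro G
    rw [hweight]
    refine Finset.prod_nonneg fun e _ => ?_
    split_ifs
    · exact hz0 _ _
    · linarith [hz1 e.1 e.2]
  have hNr : (0 : ℝ) < N := by exact_mod_cast hNpos
  let Q : Finset (Finset PortT × Finset ServT) := Finset.univ.filter fun P =>
    P.2 ⊆ R ∧ (N : ℝ) * p ≤ (P.2.card : ℝ) ∧ (N : ℝ) * d < ∑ ℓ ∈ P.1, lam ℓ
  let f : Finset (PortT × ServT) → Finset PortT × Finset ServT → ℝ := fun G P =>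
    if ∀ e ∈ P.1 ×ˢ P.2, e ∉ G then weight G else 0
  have hf0 : ∀ G P, 0 ≤ f G P := by
    intro G P
    simp only [f]
    split_ifs
    · exact hw0 G
    · exact le_rfl
  have hP : ∀ P ∈ Q, ∑ G, f G P ≤ ((4 : ℝ) ^ (N + L))⁻¹ := by
    intro P hPQ
    obtain ⟨hPR, hPp, hPd⟩ := (Finset.mem_filter.1 hPQ).2
    have h1 : ∑ G, f G P = ∏ e ∈ P.1 ×ˢ P.2, (1 - z e.1 e.2) := by
      rw [← aux_sum_avoid (fun e : PortT × ServT => z e.1 e.2)]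
      refine Finset.sum_congr rfl fun G _ => ?_
      simp only [f, hweight]
      congr!
    have hH0 : 0 ≤ H := by
      rw [hH]
      have := Real.log_nonneg (one_le_two (α := ℝ))
      positivity
    have h2 : ∏ e ∈ P.1 ×ˢ P.2, (1 - z e.1 e.2)
        ≤ ∏ e ∈ P.1 ×ˢ P.2, Real.exp (-(lam e.1 * H / ((N : ℝ) * d))) := by
      refine Finset.prod_le_prod (fun e _ => by linarith [hz1 e.1 e.2]) fun e he => ?_
      exact aux_one_sub _ _ (hz _ _ (hPR (Finset.mem_product.1 he).2))
    rw [h1]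
    refine h2.trans ?_
    rw [← Real.exp_sum, Finset.sum_neg_distrib, Finset.sum_product]
    simp only [Finset.sum_const, nsmul_eq_mul]
    rw [← Finset.mul_sum, ← Finset.sum_div, ← Finset.sum_mul]
    have h4 : ((4 : ℝ) ^ (N + L))⁻¹ = Real.exp (-(2 * Real.log 2 * ((N : ℝ) + L))) := by
      rw [Real.exp_neg]
      congr 1
      rw [show 2 * Real.log 2 * ((N : ℝ) + L) = ((N + L : ℕ) : ℝ) * (Real.log 4) by
        rw [show (4 : ℝ) = 2 ^ 2 by norm_num, Real.log_pow]; push_cast; ring]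
      rw [Real.exp_nat_mul, Real.exp_log (by norm_num)]
    rw [h4]
    apply Real.exp_le_exp.2
    apply neg_le_neg
    have h5 : 2 * Real.log 2 * ((N : ℝ) + L) = (N * p) * H := by
      rw [hH, mul_div_cancel₀ _ (mul_pos hNr hp).ne']
    rw [h5]
    have h6 : H ≤ (∑ ℓ ∈ P.1, lam ℓ) * H / (N * d) := by
      rw [le_div_iff₀ (mul_pos hNr hd), mul_comm]
      exact mul_le_mul_of_nonneg_right hPd.le hH0
    exact mul_le_mul hPp h6 hH0 (Nat.cast_nonneg _)
  calc _ ≤ ∑ G, ∑ P ∈ Q, f G P := by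
        refine Finset.sum_le_sum fun G _ => ?_
        split_ifs with h
        · exact Finset.sum_nonneg fun P _ => hf0 G P
        · push Not at h
          obtain ⟨I, hI, hIp, hID⟩ := h
          rw [hD] at hID
          have hm : ((Finset.univ.filter (fun ℓ : PortT => ∀ r ∈ I, (ℓ, r) ∉ G)), I) ∈ Q :=
            Finset.mem_filter.2 ⟨Finset.mem_univ _, hI, hIp, hID⟩
          refine le_trans (le_of_eq ?_) (Finset.single_le_sum (fun P _ => hf0 G P) hm)
          simp only [f]
          rw [if_pos]
          rintro ⟨a, b⟩ he
          obtain ⟨ha, hb⟩ := Finset.mem_product.1 he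
          exact (Finset.mem_filter.1 ha).2 b hb
    _ = ∑ P ∈ Q, ∑ G, f G P := Finset.sum_comm
    _ ≤ ∑ P ∈ Q, ((4 : ℝ) ^ (N + L))⁻¹ := Finset.sum_le_sum hP
    _ = Q.card * ((4 : ℝ) ^ (N + L))⁻¹ := by rw [Finset.sum_const, nsmul_eq_mul]
    _ ≤ (2 : ℝ) ^ (N + L) * ((4 : ℝ) ^ (N + L))⁻¹ := by
        refine mul_le_mul_of_nonneg_right ?_ (by positivity)
        have : Q.card ≤ 2 ^ (N + L) := by
          refine (Finset.card_le_univ Q).trans (le_of_eq ?_)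
          rw [Fintype.card_prod, Fintype.card_finset, Fintype.card_finset, hL, hN]
          ring
        exact_mod_cast this
    _ = ((2 : ℝ) ^ (N + L))⁻¹ := by
        rw [show (4 : ℝ) = 2 * 2 by norm_num, mul_pow, mul_inv, ← mul_assoc,
          mul_inv_cancel₀ (by positivity), one_mul]

/-- The random graph construction of Theorem 3.5: a random bipartite graph `G` between
ports and servers, with edges present independently with the given probabilities
(`weight G` is the probability of a given edge set `G`), satisfies the
well-connectedness condition (Assumption 3.2) with probability at least
`1 − 2^{−(N+L−1)}`. Here `D G I` is the total arrival rate of ports with no edge to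
the server subset `I`. -/
theorem stmt_8 {PortT ServT : Type*} [Fintype PortT] [Fintype ServT]
    (L N : ℕ) (hL : Fintype.card PortT = L) (hN : Fintype.card ServT = N)
    (hNpos : 0 < N)
    (R1 R2 : Finset ServT) (hR12 : R1 ⊆ R2)
    (lam : PortT → ℝ) (hlam : ∀ ℓ, 0 ≤ lam ℓ)
    (p₁ p₂ d₁ d₂ : ℝ) (hp1 : 0 < p₁) (hp12 : p₁ ≤ p₂) (hp2 : p₂ < 1)
    (hd1 : 0 < d₁) (hd12 : d₁ ≤ d₂)
    (H₁ H₂ : ℝ)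
    (hH1 : H₁ = 2 * Real.log 2 * ((N : ℝ) + L) / ((N : ℝ) * p₁))
    (hH2 : H₂ = 2 * Real.log 2 * ((N : ℝ) + L) / ((N : ℝ) * p₂))
    (z : PortT → ServT → ℝ)
    (hz : ∀ ℓ r, z ℓ r =
      if r ∈ R1 then min 1 (lam ℓ * H₁ / ((N : ℝ) * d₁))
      else if r ∈ R2 then min 1 (lam ℓ * H₂ / ((N : ℝ) * d₂))
      else 0)
    (weight : Finset (PortT × ServT) → ℝ)
    (hweight : ∀ G, weight G = ∏ e : PortT × ServT,
      (if e ∈ G then z e.1 e.2 else 1 - z e.1 e.2))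
    (D : Finset (PortT × ServT) → Finset ServT → ℝ)
    (hD : ∀ G I, D G I =
      ∑ ℓ ∈ Finset.univ.filter (fun ℓ : PortT => ∀ r ∈ I, (ℓ, r) ∉ G), lam ℓ) :
    1 - (2 : ℝ) ^ (-((N : ℤ) + (L : ℤ) - 1)) ≤
      ∑ G ∈ Finset.univ.filter (fun G : Finset (PortT × ServT) =>
        (∀ I ⊆ R1, (N : ℝ) * p₁ ≤ (I.card : ℝ) → D G I ≤ (N : ℝ) * d₁) ∧
        (∀ I ⊆ R2, (N : ℝ) * p₂ ≤ (I.card : ℝ) → D G I ≤ (N : ℝ) * d₂)),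
        weight G := by
  have hlog := Real.log_nonneg (one_le_two (α := ℝ))
  have hNr : (0 : ℝ) < N := by exact_mod_cast hNpos
  have hp2' : 0 < p₂ := hp1.trans_le hp12
  have hd2' : 0 < d₂ := hd1.trans_le hd12
  have hH20 : 0 ≤ H₂ := by rw [hH2]; positivity
  have hH12 : H₂ ≤ H₁ := by
    rw [hH1, hH2]
    gcongr
  have hH10 : 0 ≤ H₁ := hH20.trans hH12
  have hz0 : ∀ ℓ r, 0 ≤ z ℓ r := by
    intro ℓ r
    have := hlam ℓ
    rw [hz]
    split_ifs
    · exact le_min zero_le_one (by positivity)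
    · exact le_min zero_le_one (by positivity)
    · exact le_rfl
  have hz1 : ∀ ℓ r, z ℓ r ≤ 1 := by
    intro ℓ r
    rw [hz]
    split_ifs
    · exact min_le_left _ _
    · exact min_le_left _ _
    · exact zero_le_one
  have A1 := aux_cond L N hL hN hNpos R1 lam hlam p₁ d₁ H₁ hp1 hd1 hH1 z hz0 hz1
    (fun ℓ r hr => by rw [hz, if_pos hr]) weight hweight D hD
  have A2 := aux_cond L N hL hN hNpos R2 lam hlam p₂ d₂ H₂ hp2' hd2' hH2 z hz0 hz1
    (fun ℓ r hr => by
      rw [hz]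
      split_ifs
      · have := hlam ℓ
        refine min_le_min le_rfl ?_
        gcongr
      · exact le_rfl) weight hweight D hD
  have hw0 : ∀ G, 0 ≤ weight G := by
    intro G
    rw [hweight]
    refine Finset.prod_nonneg fun e _ => ?_
    split_ifs
    · exact hz0 _ _
    · linarith [hz1 e.1 e.2]
  have htot : ∑ G, weight G = 1 := by
    have := aux_sum_avoid (fun e : PortT × ServT => z e.1 e.2) ∅
    simp only [Finset.notMem_empty, false_imp_iff, implies_true, if_true, Finset.prod_empty] at this
    rw [← this]
    refine Finset.sum_congr rfl fun G _ => (hweight G).trans ?_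
    congr!
  have hpow : (2 : ℝ) ^ (-((N : ℤ) + (L : ℤ) - 1)) = 2 * ((2 : ℝ) ^ (N + L))⁻¹ := by
    rw [show (-((N : ℤ) + (L : ℤ) - 1)) = 1 + -((N + L : ℕ) : ℤ) by push_cast; ring,
      zpow_add₀ (by norm_num), zpow_neg, zpow_natCast, zpow_one]
  rw [hpow, Finset.sum_filter]
  have key := Finset.sum_le_sum (s := Finset.univ) (fun (G : Finset (PortT × ServT)) _ =>
    show weight G ≤ (if (∀ I ⊆ R1, (N : ℝ) * p₁ ≤ (I.card : ℝ) → D G I ≤ (N : ℝ) * d₁) ∧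
        (∀ I ⊆ R2, (N : ℝ) * p₂ ≤ (I.card : ℝ) → D G I ≤ (N : ℝ) * d₂) then weight G else 0)
      + ((if (∀ I ⊆ R1, (N : ℝ) * p₁ ≤ (I.card : ℝ) → D G I ≤ (N : ℝ) * d₁)
        then 0 else weight G)
      + (if (∀ I ⊆ R2, (N : ℝ) * p₂ ≤ (I.card : ℝ) → D G I ≤ (N : ℝ) * d₂)
        then 0 else weight G)) by
      have := hw0 G
      by_cases h1 : (∀ I ⊆ R1, (N : ℝ) * p₁ ≤ (I.card : ℝ) → D G I ≤ (N : ℝ) * d₁)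
      · by_cases h2 : (∀ I ⊆ R2, (N : ℝ) * p₂ ≤ (I.card : ℝ) → D G I ≤ (N : ℝ) * d₂)
        · rw [if_pos ⟨h1, h2⟩, if_pos h1, if_pos h2]; linarith
        · rw [if_neg (fun h => h2 h.2), if_pos h1, if_neg h2]; linarith
      · rw [if_neg (fun h => h1 h.1), if_neg h1]
        split_ifs <;> linarith)
  rw [Finset.sum_add_distrib, Finset.sum_add_distrib, htot] at key
  linarith
end

section
/- Let 𝓛 be a finite set of ports with |𝓛| = L and 𝓡 a finite set of servers with |𝓡| = N, with nested subsets 𝓡¹ ⊆ 𝓡² ⊆ 𝓡, and suppose every port has the same arrival rate λ̄ > 0. Let μ₁ > 0 with L·λ̄ ≤ N·μ₁ and λ̄ ≤ N·μ₁. Let 0 < p₁ ≤ p₂ < 1/2 and 0 < d̃₁ ≤ d̃₂ be such that N·p₁, N·p₂ are positive integers and, for j ∈ {1,2}, k_j := N·d̃_j/λ̄ is a positive integer with k_j ≤ ⌈N·μ₁/λ̄⌉/2. Set H_j = 6·(−ln p_j + (d̃_j/(p_j·λ̄))·ln(2μ₁/d̃_j)) for j ∈ {1,2}. Form a random bipartite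 graph G between 𝓛 and 𝓡 in which, independently over all pairs, port ℓ is joined to server r ∈ 𝓡¹ with probability min(1, λ̄·H₁/(N·d̃₁)), and to server r ∈ 𝓡² ∖ 𝓡¹ with probability min(1, λ̄·H₂/(N·d̃₂)). For a subset 𝓘 ⊆ 𝓡, let D_𝓘 = λ̄ times the number of ports with no edge to any server in 𝓘. Then with probability at least 1 − 2·C(N, N·p₁)^{−1}, the graph G satisfies simultaneously: D_𝓘 ≤ N·d̃₁ for every 𝓘 ⊆ 𝓡¹ with |𝓘| ≥ N·p₁, and D_𝓘 ≤ N·d̃₂ for every 𝓘 ⊆ 𝓡² with |𝓘| ≥ N·p₂. -/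
open scoped Classical

lemma aux_choose (n k : ℕ) (hk : 0 < k) (x : ℝ) (hx : (n : ℝ) ≤ x) :
    (n.choose k : ℝ) ≤ (Real.exp 1 * (x / k)) ^ k := by
  have h1 : (n.choose k : ℝ) ≤ (n : ℝ) ^ k / (k.factorial : ℝ) := Nat.choose_le_pow_div k n
  have hk' : (0 : ℝ) < k := by exact_mod_cast hk
  have h2 : (k : ℝ) ^ k / (k.factorial : ℝ) ≤ Real.exp k :=
    Real.pow_div_factorial_le_exp (k : ℝ) hk'.le k
  have hf : (0 : ℝ) < k.factorial := by exact_mod_cast k.factorial_pos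
  have h3 : (n : ℝ) ^ k ≤ x ^ k := by gcongr
  have h4 : Real.exp k = Real.exp 1 ^ k := by rw [← Real.exp_nat_mul, mul_one]
  have hx0 : (0:ℝ) ≤ x := le_trans (Nat.cast_nonneg n) hx
  calc (n.choose k : ℝ) ≤ (n : ℝ) ^ k / (k.factorial : ℝ) := h1
    _ ≤ x ^ k / (k.factorial : ℝ) := by gcongr
    _ = ((k : ℝ) ^ k / (k.factorial : ℝ)) * (x / k) ^ k := by
        rw [div_pow]; field_simp
    _ ≤ Real.exp k * (x / k) ^ k := by gcongr
    _ = _ := by rw [h4, mul_pow]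

lemma aux_sum_all {E : Type*} [Fintype E] (f g : E → ℝ) :
    ∑ G : Finset E, ∏ e, (if e ∈ G then f e else g e) = ∏ e, (f e + g e) := by
  rw [Finset.prod_add, Finset.powerset_univ]
  refine Finset.sum_congr rfl fun G _ => ?_
  rw [Finset.prod_ite]
  congr 1
  · refine Finset.prod_congr ?_ fun _ _ => rfl
    ext; simp
  · refine Finset.prod_congr ?_ fun _ _ => rfl
    ext; simp

lemma aux_avoid {E : Type*} [Fintype E] (z : E → ℝ) (S : Finset E) :
    ∑ G ∈ Finset.univ.filter (fun G : Finset E => ∀ e ∈ S, e ∉ G),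
      ∏ e, (if e ∈ G then z e else 1 - z e) = ∏ e ∈ S, (1 - z e) := by
  have := aux_sum_all (fun e => if e ∈ S then 0 else z e) (fun e => 1 - z e)
  rw [Finset.sum_filter]
  trans (∏ e, ((if e ∈ S then 0 else z e) + (1 - z e)))
  · rw [← this]
    refine Finset.sum_congr rfl fun G _ => ?_
    split_ifs with h
    · refine Finset.prod_congr rfl fun e _ => ?_
      by_cases he : e ∈ G
      · have : e ∉ S := fun hs => h e hs he
        simp [he, this]
      · simp [he]
    · push Not at h
      obtain ⟨e, he, heG⟩ := h
      symm
      apply Finset.prod_eq_zero (Finset.mem_univ e)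
      simp [he, heG]
  · rw [← Finset.prod_subset (Finset.subset_univ S)]
    · refine Finset.prod_congr rfl fun e he => ?_
      simp [he]
    · intro e _ he
      simp [he]

lemma aux_biUnion {T A : Type*} [DecidableEq A] (s : Finset T) (f : T → Finset A) (w : A → ℝ)
    (hw : ∀ a, 0 ≤ w a) : ∑ a ∈ s.biUnion f, w a ≤ ∑ t ∈ s, ∑ a ∈ f t, w a := by
  induction s using Finset.induction_on with
  | empty => simp
  | insert t s ht ih =>
    rw [Finset.biUnion_insert, Finset.sum_insert ht]
    have h1 := Finset.sum_union_inter (s₁ := f t) (s₂ := s.biUnion f) (f := w)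
    have h2 : 0 ≤ ∑ a ∈ f t ∩ s.biUnion f, w a := Finset.sum_nonneg fun a _ => hw a
    linarith

lemma aux_union {P S : Type*} [Fintype P] [Fintype S] (z : P → S → ℝ)
    (hz0 : ∀ l r, 0 ≤ z l r) (hz1 : ∀ l r, z l r ≤ 1)
    (R : Finset S) (q : ℝ) (hq1 : q ≤ 1) (hq : ∀ l, ∀ r ∈ R, q ≤ z l r) (k m : ℕ) :
    ∑ G ∈ Finset.univ.filter (fun G : Finset (P × S) =>
      ∃ I ⊆ R, k ≤ I.card ∧
        m ≤ (Finset.univ.filter (fun l : P => ∀ r ∈ I, (l, r) ∉ G)).card),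
      ∏ e : P × S, (if e ∈ G then z e.1 e.2 else 1 - z e.1 e.2)
    ≤ ((Fintype.card S).choose k : ℝ) * ((Fintype.card P).choose m : ℝ) *
        (1 - q) ^ (k * m) := by
  set w : Finset (P × S) → ℝ := fun G =>
    ∏ e : P × S, (if e ∈ G then z e.1 e.2 else 1 - z e.1 e.2) with hw
  have hw0 : ∀ G, 0 ≤ w G := fun G => Finset.prod_nonneg fun e _ => by
    split_ifs
    · exact hz0 _ _
    · linarith [hz1 e.1 e.2]
  set T := (Finset.powersetCard k R) ×ˢ (Finset.powersetCard m (Finset.univ : Finset P)) with hT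
  have hTcard : (T.card : ℝ) ≤ ((Fintype.card S).choose k : ℝ) * ((Fintype.card P).choose m : ℝ) := by
    rw [hT, Finset.card_product, Finset.card_powersetCard, Finset.card_powersetCard,
      Finset.card_univ]
    push_cast
    gcongr
    exact Finset.card_le_univ R
  calc _ ≤ ∑ G ∈ T.biUnion (fun t => Finset.univ.filter
            (fun G : Finset (P × S) => ∀ e ∈ t.2 ×ˢ t.1, e ∉ G)), w G := by
        apply Finset.sum_le_sum_of_subset_of_nonneg
        · intro G hG
          simp only [Finset.mem_filter, Finset.mem_univ, true_and] at hG
          obtain ⟨I, hIR, hI, hm⟩ := hG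
          obtain ⟨J, hJI, hJ⟩ := Finset.exists_subset_card_eq hI
          obtain ⟨A, hA, hAm⟩ := Finset.exists_subset_card_eq hm
          rw [Finset.mem_biUnion]
          refine ⟨(J, A), ?_, ?_⟩
          · simp only [hT, Finset.mem_product, Finset.mem_powersetCard]
            exact ⟨⟨hJI.trans hIR, hJ⟩, Finset.subset_univ _, hAm⟩
          · simp only [Finset.mem_filter, Finset.mem_univ, true_and, Finset.mem_product]
            rintro ⟨l, r⟩ ⟨hl, hr⟩
            exact (Finset.mem_filter.1 (hA hl)).2 r (hJI hr)
        · intros; exact hw0 _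
    _ ≤ ∑ t ∈ T, ∑ G ∈ Finset.univ.filter
            (fun G : Finset (P × S) => ∀ e ∈ t.2 ×ˢ t.1, e ∉ G), w G :=
        aux_biUnion _ _ _ hw0
    _ ≤ ∑ t ∈ T, (1 - q) ^ (k * m) := by
        refine Finset.sum_le_sum fun t ht => ?_
        simp only [hT, Finset.mem_product, Finset.mem_powersetCard] at ht
        have h : ∑ G ∈ Finset.univ.filter
            (fun G : Finset (P × S) => ∀ e ∈ t.2 ×ˢ t.1, e ∉ G), w G =
            ∏ e ∈ t.2 ×ˢ t.1, (1 - z e.1 e.2) := by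
          convert aux_avoid (fun e : P × S => z e.1 e.2) (t.2 ×ˢ t.1)
        rw [h]
        have hc : (t.2 ×ˢ t.1).card = k * m := by
          rw [Finset.card_product, ht.1.2, ht.2.2, mul_comm]
        rw [← hc]
        rw [← Finset.prod_const]
        refine Finset.prod_le_prod (fun e _ => by linarith [hz1 e.1 e.2]) fun e he => ?_
        linarith [hq e.1 e.2 (ht.1.1 (Finset.mem_product.1 he).2)]
    _ = (T.card : ℝ) * (1 - q) ^ (k * m) := by simp
    _ ≤ _ := mul_le_mul_of_nonneg_right hTcard (pow_nonneg (by linarith) _)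

lemma aux_num (L N k m : ℕ) (hk : 0 < k) (hm : 0 < m) (hkN : 2 * k < N)
    (M : ℝ) (hLM : (L : ℝ) ≤ M) (hmM : (m : ℝ) ≤ M) (H : ℝ)
    (hH : k * H = 6 * (k * Real.log (N / k) + m * Real.log (2 * M / m))) :
    (N.choose k : ℝ) * (L.choose m : ℝ) * (1 - min 1 (H / m)) ^ (k * m)
      ≤ 1 / (N.choose k : ℝ) := by
  have hk' : (0 : ℝ) < k := by exact_mod_cast hk
  have hm' : (0 : ℝ) < m := by exact_mod_cast hm
  have hc : (0 : ℝ) < N.choose k := by exact_mod_cast Nat.choose_pos (by omega)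
  rw [le_div_iff₀ hc]
  have he : Real.exp 1 < 3 := Real.exp_one_lt_three
  have hu : (2 : ℝ) ≤ N / k := by
    rw [le_div_iff₀ hk']; exact_mod_cast hkN.le
  have hv : (1 : ℝ) ≤ M / m := by
    rw [le_div_iff₀ hm']; linarith
  have hpow : (1 - min 1 (H / m)) ^ (k * m) ≤ Real.exp (-(k * H)) := by
    rcases le_total 1 (H / m) with h | h
    · rw [min_eq_left h, sub_self, zero_pow (by positivity)]
      positivity
    · rw [min_eq_right h]
      have h1 : 1 - H / m ≤ Real.exp (-(H / m)) := by
        linarith [Real.add_one_le_exp (-(H / m))]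
      calc _ ≤ Real.exp (-(H / m)) ^ (k * m) := pow_le_pow_left₀ (by linarith) h1 _
        _ = _ := by
          rw [← Real.exp_nat_mul]; congr 1; push_cast; field_simp
  set u : ℝ := N / k with hu'
  set v : ℝ := M / m with hv'
  have h2 : Real.exp (k * H) = (u ^ 6) ^ k * ((2 * v) ^ 6) ^ m := by
    have e1 : Real.log (2 * M / m) = Real.log (2 * v) := by rw [hv', mul_div_assoc]
    rw [hH, e1, mul_add, Real.exp_add]
    congr 1
    · rw [← pow_mul, mul_comm 6 k]
      rw [show (6 : ℝ) * (k * Real.log u) = ((k * 6 : ℕ) : ℝ) * Real.log u by push_cast; ring,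
        Real.exp_nat_mul, Real.exp_log (by linarith)]
    · rw [← pow_mul, mul_comm 6 m]
      rw [show (6 : ℝ) * (m * Real.log (2 * v)) = ((m * 6 : ℕ) : ℝ) * Real.log (2 * v) by
        push_cast; ring, Real.exp_nat_mul, Real.exp_log (by linarith)]
  have c1 : (N.choose k : ℝ) ≤ (u ^ 3) ^ k := by
    refine (aux_choose N k hk N le_rfl).trans ?_
    refine pow_le_pow_left₀ (by positivity) ?_ _
    change Real.exp 1 * u ≤ u ^ 3
    nlinarith [mul_le_mul hu hu (by norm_num) (by linarith)]
  have c2 : (L.choose m : ℝ) ≤ ((2 * v) ^ 6) ^ m := by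
    refine (aux_choose L m hm M hLM).trans ?_
    refine pow_le_pow_left₀ (by positivity) ?_ _
    change Real.exp 1 * v ≤ (2 * v) ^ 6
    have : v ≤ v ^ 6 := le_self_pow₀ hv (by norm_num)
    nlinarith
  have c3 : (N.choose k : ℝ) * (N.choose k : ℝ) * (L.choose m : ℝ) ≤ Real.exp (k * H) := by
    rw [h2]
    calc _ ≤ (u ^ 3) ^ k * (u ^ 3) ^ k * ((2 * v) ^ 6) ^ m := by gcongr
      _ = _ := by rw [← mul_pow]; ring
  calc _ = ((N.choose k : ℝ) * (N.choose k : ℝ) * (L.choose m : ℝ)) *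
        (1 - min 1 (H / m)) ^ (k * m) := by ring
    _ ≤ Real.exp (k * H) * Real.exp (-(k * H)) := by
      refine mul_le_mul c3 hpow (pow_nonneg ?_ _) (Real.exp_pos _).le
      linarith [min_le_left 1 (H / m)]
    _ = 1 := by rw [← Real.exp_add]; simp

/-- choose is monotone below the half -/
lemma aux_choose_mono (N a b : ℕ) (hab : a ≤ b) (hb : 2 * b ≤ N) : N.choose a ≤ N.choose b := by
  induction b, hab using Nat.le_induction with
  | base => exact le_rfl
  | succ b _ ih => exact (ih (by omega)).trans (Nat.choose_le_succ_of_lt_half_left (by omega))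

/-- The random graph construction of Theorem 3.6 for homogeneous arrival rates: with
every port having the same arrival rate `λ̄`, the sparser random bipartite graph `G`
(`weight G` is the probability of a given edge set `G`) satisfies the
well-connectedness condition (Assumption 3.2) with probability at least
`1 − 2·C(N, N·p₁)⁻¹`. Here `D G I` is `λ̄` times the number of ports with no edge
to the server subset `I`. -/
theorem stmt_9 {PortT ServT : Type*} [Fintype PortT] [Fintype ServT]
    (L N : ℕ) (hL : Fintype.card PortT = L) (hN : Fintype.card ServT = N)
    (hNpos : 0 < N)
    (R1 R2 : Finset ServT) (hR12 : R1 ⊆ R2)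
    (lamb : ℝ) (hlamb : 0 < lamb)
    (μ₁ : ℝ) (hμ1 : 0 < μ₁)
    (hLlam : (L : ℝ) * lamb ≤ (N : ℝ) * μ₁) (hlam1 : lamb ≤ (N : ℝ) * μ₁)
    (p₁ p₂ d₁ d₂ : ℝ) (hp1 : 0 < p₁) (hp12 : p₁ ≤ p₂) (hp2 : p₂ < 1 / 2)
    (hd1 : 0 < d₁) (hd12 : d₁ ≤ d₂)
    (k₁ k₂ : ℕ) (hk1pos : 0 < k₁) (hk1 : (k₁ : ℝ) = (N : ℝ) * p₁)
    (hk2pos : 0 < k₂) (hk2 : (k₂ : ℝ) = (N : ℝ) * p₂)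
    (kd₁ kd₂ : ℕ) (hkd1pos : 0 < kd₁) (hkd1 : (kd₁ : ℝ) = (N : ℝ) * d₁ / lamb)
    (hkd2pos : 0 < kd₂) (hkd2 : (kd₂ : ℝ) = (N : ℝ) * d₂ / lamb)
    (hkd1half : (kd₁ : ℝ) ≤ (⌈(N : ℝ) * μ₁ / lamb⌉₊ : ℝ) / 2)
    (hkd2half : (kd₂ : ℝ) ≤ (⌈(N : ℝ) * μ₁ / lamb⌉₊ : ℝ) / 2)
    (H₁ H₂ : ℝ)
    (hH1 : H₁ = 6 * (-Real.log p₁ + d₁ / (p₁ * lamb) * Real.log (2 * μ₁ / d₁)))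
    (hH2 : H₂ = 6 * (-Real.log p₂ + d₂ / (p₂ * lamb) * Real.log (2 * μ₁ / d₂)))
    (z : PortT → ServT → ℝ)
    (hz : ∀ ℓ r, z ℓ r =
      if r ∈ R1 then min 1 (lamb * H₁ / ((N : ℝ) * d₁))
      else if r ∈ R2 then min 1 (lamb * H₂ / ((N : ℝ) * d₂))
      else 0)
    (weight : Finset (PortT × ServT) → ℝ)
    (hweight : ∀ G, weight G = ∏ e : PortT × ServT,
      (if e ∈ G then z e.1 e.2 else 1 - z e.1 e.2))
    (D : Finset (PortT × ServT) → Finset ServT → ℝ)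
    (hD : ∀ G I, D G I =
      lamb * ((Finset.univ.filter (fun ℓ : PortT => ∀ r ∈ I, (ℓ, r) ∉ G)).card : ℝ)) :
    1 - 2 / (N.choose k₁ : ℝ) ≤
      ∑ G ∈ Finset.univ.filter (fun G : Finset (PortT × ServT) =>
        (∀ I ⊆ R1, (N : ℝ) * p₁ ≤ (I.card : ℝ) → D G I ≤ (N : ℝ) * d₁) ∧
        (∀ I ⊆ R2, (N : ℝ) * p₂ ≤ (I.card : ℝ) → D G I ≤ (N : ℝ) * d₂)),
        weight G := by
  
  have hN0 : (0 : ℝ) < N := by exact_mod_cast hNpos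
  set M : ℝ := (N : ℝ) * μ₁ / lamb with hM
  have hM1 : 1 ≤ M := by rw [hM, le_div_iff₀ hlamb]; linarith
  have hLM : (L : ℝ) ≤ M := by rw [hM, le_div_iff₀ hlamb]; linarith
  have hceil : (⌈M⌉₊ : ℝ) < M + 1 := Nat.ceil_lt_add_one (by linarith)
  have hm1 : (kd₁ : ℝ) ≤ M := by linarith
  have hm2 : (kd₂ : ℝ) ≤ M := by linarith
  have hp2' : 0 < p₂ := by linarith
  have hd2 : 0 < d₂ := by linarith
  have key : ∀ (p d H : ℝ) (k m : ℕ), 0 < p → p < 1 / 2 → 0 < d → (k : ℝ) = N * p →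
      (m : ℝ) = N * d / lamb → 0 < k → 0 < m → (m : ℝ) ≤ M →
      H = 6 * (-Real.log p + d / (p * lamb) * Real.log (2 * μ₁ / d)) →
      lamb * H / (N * d) = H / m ∧
      H / m = 6 / N * (lamb * (-Real.log p) / d + 1 / p * Real.log (2 * μ₁ / d)) ∧
      0 ≤ -Real.log p ∧ 0 ≤ Real.log (2 * μ₁ / d) ∧
      k * H = 6 * (k * Real.log (N / k) + m * Real.log (2 * M / m)) ∧ 2 * k < N := by
    intro p d H k m hp hph hd hk hm hk0 hm0 hmM hH
    have e1 : (N : ℝ) / k = p⁻¹ := by rw [hk]; field_simp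
    have e2 : 2 * M / m = 2 * μ₁ / d := by rw [hm, hM]; field_simp
    have hm0' : (0 : ℝ) < m := by exact_mod_cast hm0
    refine ⟨?_, ?_, ?_, ?_, ?_, ?_⟩
    · rw [hm]; field_simp
    · rw [hH, hm]; field_simp
    · linarith [Real.log_nonpos hp.le (by linarith)]
    · rw [← e2]
      apply Real.log_nonneg
      rw [le_div_iff₀ hm0']; linarith
    · rw [e1, e2, Real.log_inv, hH, hk, hm]; field_simp
    · have : (2 * k : ℝ) < N := by rw [hk]; nlinarith
      exact_mod_cast this
  obtain ⟨a1, b1, c1, l1, f1, g1⟩ := key p₁ d₁ H₁ k₁ kd₁ hp1 (by linarith) hd1 hk1 hkd1 hk1pos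
    hkd1pos hm1 hH1
  obtain ⟨a2, b2, c2, l2, f2, g2⟩ := key p₂ d₂ H₂ k₂ kd₂ hp2' hp2 hd2 hk2 hkd2 hk2pos
    hkd2pos hm2 hH2
  rw [a1, a2] at hz
  have hq2 : 0 ≤ H₂ / kd₂ := by rw [b2]; positivity
  have hq12 : H₂ / kd₂ ≤ H₁ / kd₁ := by
    rw [b1, b2]
    have i1 : Real.log p₁ ≤ Real.log p₂ := Real.log_le_log hp1 hp12
    have i2 : Real.log (2 * μ₁ / d₂) ≤ Real.log (2 * μ₁ / d₁) :=
      Real.log_le_log (by positivity) (by gcongr)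
    gcongr
  have hq1 : 0 ≤ H₁ / kd₁ := hq2.trans hq12
  have hz0 : ∀ l r, 0 ≤ z l r := by
    intro l r; rw [hz]
    split_ifs
    · exact le_min zero_le_one hq1
    · exact le_min zero_le_one hq2
    · exact le_rfl
  have hz1 : ∀ l r, z l r ≤ 1 := by
    intro l r; rw [hz]
    split_ifs
    · exact min_le_left _ _
    · exact min_le_left _ _
    · exact zero_le_one
  have hzR1 : ∀ l, ∀ r ∈ R1, min 1 (H₁ / kd₁) ≤ z l r := by
    intro l r hr; rw [hz, if_pos hr]
  have hzR2 : ∀ l, ∀ r ∈ R2, min 1 (H₂ / kd₂) ≤ z l r := by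
    intro l r hr; rw [hz]
    split_ifs
    · exact min_le_min le_rfl hq12
    · exact le_rfl
  have u1 := aux_union z hz0 hz1 R1 _ (min_le_left 1 (H₁ / kd₁)) hzR1 k₁ kd₁
  have u2 := aux_union z hz0 hz1 R2 _ (min_le_left 1 (H₂ / kd₂)) hzR2 k₂ kd₂
  rw [hL, hN] at u1 u2
  replace u1 := u1.trans (aux_num L N k₁ kd₁ hk1pos hkd1pos g1 M hLM hm1 H₁ f1)
  replace u2 := u2.trans (aux_num L N k₂ kd₂ hk2pos hkd2pos g2 M hLM hm2 H₂ f2)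
  have hk12 : k₁ ≤ k₂ := by
    have : (k₁ : ℝ) ≤ k₂ := by rw [hk1, hk2]; gcongr
    exact_mod_cast this
  have hch : 1 / (N.choose k₂ : ℝ) ≤ 1 / (N.choose k₁ : ℝ) := by
    apply one_div_le_one_div_of_le
    · exact_mod_cast Nat.choose_pos (by omega)
    · exact_mod_cast aux_choose_mono N k₁ k₂ hk12 g2.le
  have hw0 : ∀ G, 0 ≤ weight G := by
    intro G
    rw [hweight]
    refine Finset.prod_nonneg fun e _ => ?_
    split_ifs
    · exact hz0 _ _
    · linarith [hz1 e.1 e.2]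
  have htot : ∑ G, weight G = 1 := by
    have := aux_sum_all (fun e : PortT × ServT => z e.1 e.2) (fun e => 1 - z e.1 e.2)
    simp only [add_sub_cancel, Finset.prod_const_one] at this
    rw [← this]
    refine Finset.sum_congr rfl fun G _ => ?_
    rw [hweight]
    refine Finset.prod_congr rfl fun e _ => ?_
    congr
  simp only [← hweight] at u1 u2
  have hbad : ∀ (R : Finset ServT) (p d : ℝ) (k m : ℕ), (k : ℝ) = N * p → (m : ℝ) = N * d / lamb →
      ∀ G, (¬ ∀ I ⊆ R, (N : ℝ) * p ≤ (I.card : ℝ) → D G I ≤ (N : ℝ) * d) →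
      ∃ I ⊆ R, k ≤ I.card ∧
        m ≤ (Finset.univ.filter (fun l : PortT => ∀ r ∈ I, (l, r) ∉ G)).card := by
    intro R p d k m hk hm G h
    push Not at h
    obtain ⟨I, hI, hc, hDI⟩ := h
    refine ⟨I, hI, by rw [← hk] at hc; exact_mod_cast hc, ?_⟩
    rw [hD] at hDI
    have : (m : ℝ) ≤
        ((Finset.univ.filter (fun l : PortT => ∀ r ∈ I, (l, r) ∉ G)).card : ℝ) := by
      rw [hm, div_le_iff₀ hlamb]; linarith
    exact_mod_cast this
  set B1 := Finset.univ.filter (fun G : Finset (PortT × ServT) =>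
      ∃ I ⊆ R1, k₁ ≤ I.card ∧
        kd₁ ≤ (Finset.univ.filter (fun l : PortT => ∀ r ∈ I, (l, r) ∉ G)).card) with hB1
  set B2 := Finset.univ.filter (fun G : Finset (PortT × ServT) =>
      ∃ I ⊆ R2, k₂ ≤ I.card ∧
        kd₂ ≤ (Finset.univ.filter (fun l : PortT => ∀ r ∈ I, (l, r) ∉ G)).card) with hB2
  set good := Finset.univ.filter (fun G : Finset (PortT × ServT) =>
        (∀ I ⊆ R1, (N : ℝ) * p₁ ≤ (I.card : ℝ) → D G I ≤ (N : ℝ) * d₁) ∧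
        (∀ I ⊆ R2, (N : ℝ) * p₂ ≤ (I.card : ℝ) → D G I ≤ (N : ℝ) * d₂)) with hgood
  have hsplit : ∑ G, weight G = ∑ G ∈ good, weight G + ∑ G ∈ goodᶜ, weight G :=
    (Finset.sum_add_sum_compl good weight).symm
  have hsub : goodᶜ ⊆ B1 ∪ B2 := by
    intro G hG
    rw [Finset.mem_compl, hgood, Finset.mem_filter] at hG
    simp only [Finset.mem_univ, true_and, not_and_or] at hG
    rw [Finset.mem_union, hB1, hB2, Finset.mem_filter, Finset.mem_filter]
    rcases hG with h | h
    · exact Or.inl ⟨Finset.mem_univ _, hbad R1 p₁ d₁ k₁ kd₁ hk1 hkd1 G h⟩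
    · exact Or.inr ⟨Finset.mem_univ _, hbad R2 p₂ d₂ k₂ kd₂ hk2 hkd2 G h⟩
  have hs1 : ∑ G ∈ goodᶜ, weight G ≤ ∑ G ∈ B1 ∪ B2, weight G :=
    Finset.sum_le_sum_of_subset_of_nonneg hsub fun G _ _ => hw0 G
  have hs2 := Finset.sum_union_inter (s₁ := B1) (s₂ := B2) (f := weight)
  have hs3 : 0 ≤ ∑ G ∈ B1 ∩ B2, weight G := Finset.sum_nonneg fun G _ => hw0 G
  have : 2 / (N.choose k₁ : ℝ) = 1 / (N.choose k₁ : ℝ) + 1 / (N.choose k₁ : ℝ) := by ring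
  linarith
end

section
/- Fix an integer K ≥ 1, real numbers μ₁ ≥ μ₂ ≥ ⋯ ≥ μ_K > 0 and α₁, …, α_{K−1} > 0, a real C*_K ≥ 0, and set λ = ∑_{m=1}^{K−1} μ_m α_m + μ_K·C*_K. Let ε > 0, b ≥ 1, and let N ≥ 1 satisfy ε²·N ≥ 1152·(μ₁/μ_K)·b⁵·ln N. Define τ = μ₁/μ_K, δ = μ_K·ε/(6·μ₁·b²), and χ = 96·τ·b³·ln N. Suppose s₁, …, s_K ≥ 0 satisfy s_m ≤ α_m for all m ≤ K−1, ∑_{m=1}^{K−1} s_m ≥ ∑_{m=1}^{K−1} α_m − (τ·δ + χ/(ε·N)), and s_K ≥ C*_K + 3·τ²·δ − χ/(ε·N). Then ∑_{m=1}^{K} μ_m s_m ≥ λ + μ₁·δ. -/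
/-- The arithmetic core of Lemma 5.6 (firstK-enoughWork): under the buffer-size
condition and the two state-space-collapse lower bounds on the busy-server fractions
`s m`, the total departure rate `∑ μ m * s m` exceeds `λ + μ₁ δ`. -/
theorem stmt_10 (K : ℕ) (hK : 1 ≤ K) (μ α s : ℕ → ℝ)
    (hμdec : ∀ m, 1 ≤ m → m < K → μ (m + 1) ≤ μ m) (hμK : 0 < μ K)
    (hα : ∀ m ∈ Finset.Icc 1 (K - 1), 0 < α m)
    (CK : ℝ) (hCK : 0 ≤ CK)
    (lam : ℝ) (hlam : lam = ∑ m ∈ Finset.Icc 1 (K - 1), μ m * α m + μ K * CK)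
    (ε b : ℝ) (hε : 0 < ε) (hb : 1 ≤ b)
    (N : ℕ) (hN : 1 ≤ N)
    (hbuf : 1152 * (μ 1 / μ K) * b ^ 5 * Real.log N ≤ ε ^ 2 * N)
    (τ δ χ : ℝ)
    (hτ : τ = μ 1 / μ K)
    (hδ : δ = μ K * ε / (6 * μ 1 * b ^ 2))
    (hχ : χ = 96 * τ * b ^ 3 * Real.log N)
    (hs0 : ∀ m ∈ Finset.Icc 1 K, 0 ≤ s m)
    (hsα : ∀ m ∈ Finset.Icc 1 (K - 1), s m ≤ α m)
    (hs1 : ∑ m ∈ Finset.Icc 1 (K - 1), α m - (τ * δ + χ / (ε * N)) ≤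
        ∑ m ∈ Finset.Icc 1 (K - 1), s m)
    (hsK : CK + 3 * τ ^ 2 * δ - χ / (ε * N) ≤ s K) :
    lam + μ 1 * δ ≤ ∑ m ∈ Finset.Icc 1 K, μ m * s m := by
  have hanti : ∀ m, 1 ≤ m → m ≤ K → μ m ≤ μ 1 := by
    intro m h1
    induction m, h1 using Nat.le_induction with
    | base => intro _; exact le_rfl
    | succ n hn ih => intro h; exact (hμdec n hn (by omega)).trans (ih (by omega))
  have hμ1 : 0 < μ 1 := lt_of_lt_of_le hμK (hanti K hK le_rfl)
  have hNr : (0 : ℝ) < N := by exact_mod_cast hN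
  have hb0 : 0 < b := by linarith
  have hτ1 : 1 ≤ τ := by rw [hτ, one_le_div hμK]; exact hanti K hK le_rfl
  have hμτ : μ K * τ = μ 1 := by rw [hτ]; field_simp
  have hτδ : τ * δ = ε / (6 * b ^ 2) := by rw [hτ, hδ]; field_simp
  have hδ0 : 0 < δ := by rw [hδ]; positivity
  have hx : χ / (ε * N) ≤ τ * δ / 2 := by
    rw [hτδ, div_div, div_le_div_iff₀ (by positivity) (by positivity), hχ, hτ]
    linarith
  have hsum : ∑ m ∈ Finset.Icc 1 (K - 1), μ m * (α m - s m) ≤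
      ∑ m ∈ Finset.Icc 1 (K - 1), μ 1 * (α m - s m) := by
    apply Finset.sum_le_sum
    intro m hm
    have h := Finset.mem_Icc.mp hm
    exact mul_le_mul_of_nonneg_right (hanti m h.1 (by omega)) (sub_nonneg.mpr (hsα m hm))
  rw [← Finset.mul_sum, Finset.sum_sub_distrib] at hsum
  simp only [mul_sub, Finset.sum_sub_distrib] at hsum
  have hsplit : ∑ m ∈ Finset.Icc 1 K, μ m * s m =
      ∑ m ∈ Finset.Icc 1 (K - 1), μ m * s m + μ K * s K := by
    obtain ⟨k, rfl⟩ : ∃ k, K = k + 1 := ⟨K - 1, by omega⟩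
    rw [Finset.sum_Icc_succ_top (by omega)]
    simp
  rw [hsplit, hlam]
  have h1 := mul_le_mul_of_nonneg_left hs1 hμ1.le
  have h2 := mul_le_mul_of_nonneg_left hsK hμK.le
  have h3 := mul_le_mul_of_nonneg_left hx hμ1.le
  have h4 := mul_le_mul_of_nonneg_left hx hμK.le
  have h5 : μ K * (τ * δ / 2) = μ 1 * δ / 2 := by rw [← hμτ]; ring
  have h6 : μ K * (3 * τ ^ 2 * δ) = 3 * (μ 1 * (τ * δ)) := by rw [← hμτ]; ring
  have h7 : μ 1 * δ ≤ μ 1 * (τ * δ) :=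
    mul_le_mul_of_nonneg_left (by nlinarith) hμ1.le
  rw [mul_sub, mul_add] at h1 h2
  linarith
end
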